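/- Let H be a real Hilbert space, λ ∈ ℝ, and let f : H → (-∞,∞] be proper, λ-convex and lower semicontinuous. Let τ > 0 be such that (1 + τλ)^{-1} ≤ 2. Then for all δ > 0 and all x_0, x_δ ∈ H with ∂f(x_0) ≠ ∅ and ∂f(x_δ) ≠ ∅, one has Γ_δ(x_0, x_δ) ≤ 2δ · min(|∇f|²(x_0), |∇f|²(x_δ)) + (40/δ + 12δ/τ²)‖x_δ − x_0‖² + (12δ + 40τ²/δ)‖∇f(x_δ) − ∇f(x_0)‖². -/

import Mathlib

open Filter Topology MeasureTheory Set
open scoped ENNReal RealInnerProductSpace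

noncomputable section

attribute [local instance] Classical.propDecidable

variable {H : Type*} [NormedAddCommGroup H] [InnerProductSpace ℝ H] [CompleteSpace H]

/-- `f : H → (-∞,∞]` is proper: not identically `⊤` (and it never takes the value `⊥`). -/
def ProperFn (f : H → EReal) : Prop :=
  (∃ x, f x ≠ ⊤) ∧ ∀ x, f x ≠ ⊥

/-- `f` is `λ`-convex: `x ↦ f x - (λ/2)‖x‖²` is convex, expressed via the perturbed
convexity inequality. -/
def LambdaConvex (lam : ℝ) (f : H → EReal) : Prop :=
  ∀ x y : H, ∀ t : ℝ, 0 ≤ t → t ≤ 1 →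
    f ((1 - t) • x + t • y)
      ≤ ((1 - t : ℝ) : EReal) * f x + ((t : ℝ) : EReal) * f y
        - ((lam / 2 * (t * (1 - t)) * ‖x - y‖ ^ 2 : ℝ) : EReal)

/-- The subdifferential of a `λ`-convex function at `x` (contained in the domain of `f`). -/
def subdiff (lam : ℝ) (f : H → EReal) (x : H) : Set H :=
  {p : H | f x ≠ ⊤ ∧
    ∀ y : H, f x + ((⟪p, y - x⟫ + lam / 2 * ‖y - x‖ ^ 2 : ℝ) : EReal) ≤ f y}

/-- `∇f(x)`: the element of minimal norm of `∂f(x)` (junk value `0` if there is none). -/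
def gradMin (lam : ℝ) (f : H → EReal) (x : H) : H :=
  if h : ∃ p ∈ subdiff lam f x, ∀ q ∈ subdiff lam f x, ‖p‖ ≤ ‖q‖ then h.choose else 0

/-- `|∇f|(x) ∈ [0,∞]`, equal to `+∞` when `∂f(x) = ∅` (in particular when `f x = ⊤`). -/
def gradNorm (lam : ℝ) (f : H → EReal) (x : H) : ℝ≥0∞ :=
  if (subdiff lam f x).Nonempty then ENNReal.ofReal ‖gradMin lam f x‖ else ⊤

/-- The resolvent `J_τ(x)`: the minimizer of `y ↦ f y + ‖y-x‖²/(2τ)` (junk `0` if none). -/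
def Jres (f : H → EReal) (τ : ℝ) (x : H) : H :=
  if h : ∃ y : H, ∀ z : H,
      f y + ((‖y - x‖ ^ 2 / (2 * τ) : ℝ) : EReal)
        ≤ f z + ((‖z - x‖ ^ 2 / (2 * τ) : ℝ) : EReal)
  then h.choose else 0

/-- The Moreau–Yosida regularization `f_τ(x) = min_y (f y + ‖y-x‖²/(2τ))`. -/
def moreau (f : H → EReal) (τ : ℝ) (x : H) : ℝ :=
  (f (Jres f τ x)).toReal + ‖Jres f τ x - x‖ ^ 2 / (2 * τ)

/-- `γ` is absolutely continuous on `[a,b]` with an integrable derivative. -/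
abbrev IsACCurve (a b : ℝ) (γ : ℝ → H) : Prop :=
  ∃ g : ℝ → H, IntegrableOn g (Icc a b) ∧ ∀ t ∈ Icc a b, γ t = γ a + ∫ s in a..t, g s

/-- The action `I_f^{[a,b]}(γ) = ∫_a^b (‖γ̇‖² + |∇f|²(γ)) dt ∈ [0,∞]`, set to `+∞` when `γ`
is not absolutely continuous. -/
def actionFn (lam : ℝ) (f : H → EReal) (a b : ℝ) (γ : ℝ → H) : ℝ≥0∞ :=
  if h : IsACCurve a b γ then
    ∫⁻ t in Ioc a b, (ENNReal.ofReal (‖h.choose t‖ ^ 2) + gradNorm lam f (γ t) ^ 2)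
  else ⊤

/-- `Θ_{f,x₀,x₁}`: the action on `[0,1]` with endpoint constraints. -/
def Theta (lam : ℝ) (f : H → EReal) (x0 x1 : H) (γ : ℝ → H) : ℝ≥0∞ :=
  if γ 0 = x0 ∧ γ 1 = x1 then actionFn lam f 0 1 γ else ⊤

/-- `Γ_δ(x₀,x_δ)`: infimum of the action over curves joining the endpoints. -/
def GammaInf (lam : ℝ) (f : H → EReal) (δ : ℝ) (x0 xδ : H) : ℝ≥0∞ :=
  ⨅ (γ : ℝ → H) (_ : γ 0 = x0 ∧ γ δ = xδ), actionFn lam f 0 δ γ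

/-- Mosco convergence of `fh` to `f`: recovery sequences for the strong topology, and the
`liminf` inequality along weakly convergent sequences. -/
def Mosco (fh : ℕ → H → EReal) (f : H → EReal) : Prop :=
  (∀ x : H, ∃ xh : ℕ → H, Tendsto xh atTop (𝓝 x) ∧
      Filter.limsup (fun h => fh h (xh h)) atTop ≤ f x) ∧
  (∀ (xh : ℕ → H) (x : H),
      (∀ p : H, Tendsto (fun h => ⟪xh h, p⟫) atTop (𝓝 ⟪x, p⟫)) →
      f x ≤ Filter.liminf (fun h => fh h (xh h)) atTop)

/-!
The resolvent `J_τ = (1 + τ ∂f)⁻¹` is Lipschitz on the whole space, and so is the Yosida map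
`A_τ = (1 - J_τ) / τ`, which selects an element of `∂f ∘ J_τ`. If `p ∈ ∂f(x)`, then
`J_τ (x + τ p) = x` and `A_τ (x + τ p) = p`. Hence, for `p₀ ∈ ∂f(x₀)` and `p_δ ∈ ∂f(x_δ)`, the
segment from `x₀ + τ p₀` to `x_δ + τ p_δ` is mapped by `J_τ` to a Lipschitz curve from `x₀` to
`x_δ`, along which `|∇f|` is at most `‖A_τ‖`, controlled by its values at the ends. That a Lipschitz
curve in a Hilbert space is the integral of its derivative follows from weak compactness in `L²` of
its difference quotients.
-/

section LipschitzCurves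

variable {E : Type*} [NormedAddCommGroup E]

lemma norm_add_sq_le_two_mul (u v : E) : ‖u + v‖ ^ 2 ≤ 2 * ‖u‖ ^ 2 + 2 * ‖v‖ ^ 2 :=
  calc ‖u + v‖ ^ 2 ≤ (‖u‖ + ‖v‖) ^ 2 := by gcongr; exact norm_add_le u v
    _ ≤ 2 * ‖u‖ ^ 2 + 2 * ‖v‖ ^ 2 := by linarith [add_sq_le (a := ‖u‖) (b := ‖v‖)]

lemma norm_inv_smul_sub_le_of_lipschitzWith [NormedSpace ℝ E] {γ : ℝ → E} {K : NNReal}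
    (hγ : LipschitzWith K γ) (h s : ℝ) : ‖h⁻¹ • (γ (s + h) - γ s)‖ ≤ K := by
  have hdist : ‖γ (s + h) - γ s‖ ≤ K * |h| := by
    simpa [dist_eq_norm] using hγ.dist_le_mul (s + h) s
  rw [norm_smul, norm_inv, Real.norm_eq_abs, inv_mul_eq_div]
  exact div_le_of_le_mul₀ (abs_nonneg h) K.2 hdist

lemma tendsto_integral_inv_smul_sub [NormedSpace ℝ E] [CompleteSpace E] {γ : ℝ → E}
    (hγ : Continuous γ) (a b : ℝ) :
    Tendsto (fun h : ℝ => ∫ s in a..b, h⁻¹ • (γ (s + h) - γ s)) (𝓝[≠] 0) (𝓝 (γ b - γ a)) := by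
  have hint (u v : ℝ) : IntervalIntegrable γ volume u v := hγ.intervalIntegrable u v
  have hslope (x : ℝ) : Tendsto (fun h : ℝ => h⁻¹ • ((∫ s in 0..x + h, γ s) - ∫ s in 0..x, γ s))
      (𝓝[≠] 0) (𝓝 (γ x)) :=
    (intervalIntegral.integral_hasDerivAt_right (hint 0 x)
      (hγ.stronglyMeasurableAtFilter _ _) hγ.continuousAt).tendsto_slope_zero
  refine ((hslope b).sub (hslope a)).congr fun h => ?_
  have hshift : IntervalIntegrable (fun s => γ (s + h)) volume a b :=
    (by fun_prop : Continuous fun s => γ (s + h)).intervalIntegrable a b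
  rw [intervalIntegral.integral_smul, intervalIntegral.integral_sub hshift (hint a b),
    intervalIntegral.integral_comp_add_right, ← smul_sub,
    ← intervalIntegral.integral_interval_sub_left (hint 0 (b + h)) (hint 0 (a + h)),
    ← intervalIntegral.integral_interval_sub_left (hint 0 b) (hint 0 a), sub_sub_sub_comm]

lemma ae_norm_le_of_lipschitzOnWith [NormedSpace ℝ E] [CompleteSpace E] {γ g : ℝ → E} {K : NNReal}
    {a b : ℝ} (hγ : LipschitzOnWith K γ (Icc a b)) (hg : IntegrableOn g (Icc a b))
    (hint : ∀ t ∈ Icc a b, γ t = γ a + ∫ s in a..t, g s) :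
    ∀ᵐ t ∂volume.restrict (Ioc a b), ‖g t‖ ≤ K := by
  rcases lt_or_ge b a with hba | hab
  · simp [Ioc_eq_empty_of_le hba.le]
  have hgi : IntervalIntegrable g volume a b :=
    (intervalIntegrable_iff_integrableOn_Icc_of_le hab).2 hg
  have hprimitive : LipschitzOnWith K (fun t => ∫ s in a..t, g s) (Icc a b) :=
    LipschitzOnWith.of_dist_le_mul fun x hx y hy => by
      simpa only [hint x hx, hint y hy, dist_add_left] using hγ.dist_le_mul x hx y hy
  rw [← restrict_Ioo_eq_restrict_Ioc, ae_restrict_iff' measurableSet_Ioo]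
  filter_upwards [hgi.ae_hasDerivAt_integral] with t hderiv ht
  refine (hderiv ?_ a left_mem_uIcc).le_of_lipschitzOn (Icc_mem_nhds ht.1 ht.2) hprimitive
  rw [uIcc_of_le hab]
  exact Ioo_subset_Icc_self ht

variable [InnerProductSpace ℝ E] [CompleteSpace E]

lemma exists_forall_tendsto_inner_of_norm_le {ι : Type*} (U : Ultrafilter ι) {u : ι → E} {R : ℝ}
    (hu : ∀ i, ‖u i‖ ≤ R) : ∃ v : E, ∀ φ : E, Tendsto (fun i => ⟪u i, φ⟫) U (𝓝 ⟪v, φ⟫) := by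
  let D := InnerProductSpace.toDual ℝ E
  have hball : ∀ i, StrongDual.toWeakDual (D (u i)) ∈
      WeakDual.toStrongDual ⁻¹' Metric.closedBall (0 : StrongDual ℝ E) R := fun i => by
    rw [mem_preimage, mem_closedBall_zero_iff]
    exact (D.norm_map (u i)).le.trans (hu i)
  obtain ⟨w, -, hw⟩ := (WeakDual.isCompact_closedBall 0 R).ultrafilter_le_nhds
    (U.map fun i => StrongDual.toWeakDual (D (u i)))
    (le_principal_iff.2 (Filter.mem_map.2 (Eventually.of_forall hball)))
  refine ⟨D.symm (WeakDual.toStrongDual w), fun φ => ?_⟩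
  rw [InnerProductSpace.toDual_symm_apply]
  exact ((WeakDual.eval_continuous φ).tendsto w).comp hw

lemma exists_integrable_tendsto_inner_setIntegral {α ι : Type*} {mα : MeasurableSpace α}
    {μ : Measure α} [IsFiniteMeasure μ] (U : Ultrafilter ι) {u : ι → α → E} {C : ℝ}
    (hmeas : ∀ i, AEStronglyMeasurable (u i) μ) (hbound : ∀ i, ∀ᵐ x ∂μ, ‖u i x‖ ≤ C) :
    ∃ g : α → E, Integrable g μ ∧ ∀ s, MeasurableSet s → ∀ e : E,
      Tendsto (fun i => ⟪e, ∫ x in s, u i x ∂μ⟫) U (𝓝 ⟪e, ∫ x in s, g x ∂μ⟫) := by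
  have hmem (i : ι) : MemLp (u i) 2 μ := MemLp.of_bound (hmeas i) C (hbound i)
  have hnorm (i : ι) : ‖(hmem i).toLp‖ ≤ μ.real univ ^ (2 : ℝ≥0∞).toReal⁻¹ * max C 0 :=
    Lp.norm_le_of_ae_bound (le_max_right C 0) <| by
      filter_upwards [(hmem i).coeFn_toLp, hbound i] with x hx hux
      exact hx ▸ hux.trans (le_max_left C 0)
  obtain ⟨g, hg⟩ := exists_forall_tendsto_inner_of_norm_le U hnorm
  refine ⟨g, (Lp.memLp g).integrable one_le_two, fun s hs e => ?_⟩
  have hinner (G : Lp E 2 μ) :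
      ⟪G, indicatorConstLp 2 hs (measure_ne_top μ s) e⟫ = ⟪e, ∫ x in s, G x ∂μ⟫ := by
    rw [real_inner_comm, L2.inner_indicatorConstLp_eq_inner_setIntegral ℝ]
  have hcoe (i : ι) : ∫ x in s, (hmem i).toLp (u i) x ∂μ = ∫ x in s, u i x ∂μ :=
    integral_congr_ae (ae_restrict_of_ae (hmem i).coeFn_toLp)
  simpa only [hinner, hcoe] using hg (indicatorConstLp 2 hs (measure_ne_top μ s) e)

lemma isACCurve_of_lipschitzWith {γ : ℝ → E} {K : NNReal} (hγ : LipschitzWith K γ) (a b : ℝ) :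
    IsACCurve a b γ := by
  let U : Ultrafilter ℝ := Ultrafilter.of (𝓝[≠] 0)
  obtain ⟨g, hg, hlim⟩ := exists_integrable_tendsto_inner_setIntegral (U := U)
    (μ := volume.restrict (Icc a b)) (u := fun h s => h⁻¹ • (γ (s + h) - γ s)) (C := K)
    (fun h => by have := hγ.continuous; fun_prop)
    (fun h => .of_forall (norm_inv_smul_sub_le_of_lipschitzWith hγ h))
  refine ⟨g, hg, fun t ht => ?_⟩
  have hsub : Ioc a t ⊆ Icc a b := Ioc_subset_Icc_self.trans (Icc_subset_Icc_right ht.2)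
  have hstrong : Tendsto (fun h : ℝ => ∫ s in a..t, h⁻¹ • (γ (s + h) - γ s)) U (𝓝 (γ t - γ a)) :=
    (tendsto_integral_inv_smul_sub hγ.continuous a t).mono_left (Ultrafilter.of_le _)
  have hintegral : ∫ s in a..t, g s = γ t - γ a := ext_inner_left ℝ fun e => by
    refine tendsto_nhds_unique ?_ (tendsto_const_nhds.inner hstrong)
    simpa only [Measure.restrict_restrict_of_subset hsub, intervalIntegral.integral_of_le ht.1]
      using hlim (Ioc a t) measurableSet_Ioc e
  rw [hintegral, add_sub_cancel]

lemma actionFn_le_of_lipschitzWith {lam : ℝ} {f : E → EReal} {γ : ℝ → E} {K : NNReal} {a b : ℝ}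
    {M : ℝ≥0∞} (hγ : LipschitzWith K γ)
    (hM : ∀ t ∈ Ioc a b, gradNorm lam f (γ t) ^ 2 ≤ M) :
    actionFn lam f a b γ ≤ ((K : ℝ≥0∞) ^ 2 + M) * ENNReal.ofReal (b - a) := by
  have hac := isACCurve_of_lipschitzWith hγ a b
  rw [actionFn, dif_pos hac, ← Real.volume_Ioc, ← setLIntegral_const]
  refine lintegral_mono_ae ?_
  filter_upwards [ae_norm_le_of_lipschitzOnWith hγ.lipschitzOnWith hac.choose_spec.1
    hac.choose_spec.2, ae_restrict_mem measurableSet_Ioc] with t hspeed ht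
  gcongr
  · rw [ENNReal.ofReal_pow (norm_nonneg _), ← ENNReal.ofReal_coe_nnreal]
    gcongr
  · exact hM t ht

end LipschitzCurves

section StrongConvexity

variable {E : Type*} [NormedAddCommGroup E] {D : Set E} {F : E → ℝ} {m : ℝ}

lemma lt_of_strongConvexOn_of_forall_mem_closedBall [NormedSpace ℝ E] (hF : StrongConvexOn D m F)
    {x₀ z : E} (hx₀ : x₀ ∈ D) (hz : z ∈ D) {r : ℝ} (hr : 0 < r) (hrz : r ≤ ‖z - x₀‖)
    (hnear : ∀ y ∈ D, ‖y - x₀‖ ≤ r → F x₀ - 1 < F y) :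
    F x₀ - ‖z - x₀‖ / r + m / 2 * (‖z - x₀‖ ^ 2 - r * ‖z - x₀‖) < F z := by
  -- Strong convexity is applied at the point of the segment `[x₀, z]` at distance `r` from `x₀`.
  obtain ⟨d, hd⟩ : ∃ d, d = ‖z - x₀‖ := ⟨_, rfl⟩
  obtain ⟨t, ht⟩ : ∃ t, t = r / d := ⟨_, rfl⟩
  rw [← hd] at hrz ⊢
  have hd0 : 0 < d := hr.trans_le hrz
  have ht0 : 0 < t := ht ▸ div_pos hr hd0
  have ht1 : 0 ≤ 1 - t := sub_nonneg.2 (ht ▸ (div_le_one hd0).2 hrz)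
  have htd : t * d = r := ht ▸ div_mul_cancel₀ r hd0.ne'
  have hdist : ‖(1 - t) • x₀ + t • z - x₀‖ = r := by
    rw [show (1 - t) • x₀ + t • z - x₀ = t • (z - x₀) by module, norm_smul, ← hd,
      Real.norm_of_nonneg ht0.le, htd]
  have hlower := hnear _ (hF.1 hx₀ hz ht1 ht0.le (sub_add_cancel 1 t)) hdist.le
  have hupper := hF.2 hx₀ hz ht1 ht0.le (sub_add_cancel 1 t)
  simp only [smul_eq_mul, norm_sub_rev x₀ z, ← hd] at hupper
  refine lt_of_mul_lt_mul_left ?_ ht0.le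
  have hscale : t * (F x₀ - d / r + m / 2 * (d ^ 2 - r * d)) =
      t * F x₀ - 1 + (1 - t) * t * (m / 2 * d ^ 2) := by
    rw [← htd]; field_simp
  linarith

lemma bddBelow_image_of_strongConvexOn [NormedSpace ℝ E] (hm : 0 < m)
    (hF : StrongConvexOn D m F) (hclosed : ∀ c, IsClosed {x ∈ D | F x ≤ c}) :
    BddBelow (F '' D) := by
  rcases D.eq_empty_or_nonempty with rfl | ⟨x₀, hx₀⟩
  · simp
  obtain ⟨r, hr, hball⟩ := Metric.nhds_basis_closedBall.mem_iff.1
    ((hclosed (F x₀ - 1)).isOpen_compl.mem_nhds fun h => by linarith [h.2])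
  have hnear : ∀ z ∈ D, ‖z - x₀‖ ≤ r → F x₀ - 1 < F z := fun z hz hzr =>
    not_le.1 fun hle => hball (mem_closedBall_iff_norm.2 hzr) ⟨hz, hle⟩
  obtain ⟨q, hq⟩ : ∃ q, q = m * r / 2 + 1 / r := ⟨_, rfl⟩
  refine ⟨F x₀ - 1 - q ^ 2 / (2 * m), ?_⟩
  rintro _ ⟨z, hz, rfl⟩
  rcases le_total ‖z - x₀‖ r with hzr | hrz
  · linarith [hnear z hz hzr, (by positivity : 0 ≤ q ^ 2 / (2 * m))]
  · have hgrowth := lt_of_strongConvexOn_of_forall_mem_closedBall hF hx₀ hz hr hrz hnear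
    have hsquare : 0 ≤ (m * ‖z - x₀‖ - q) ^ 2 / (2 * m) := by positivity
    have hcomplete : (m * ‖z - x₀‖ - q) ^ 2 / (2 * m) =
        m / 2 * (‖z - x₀‖ ^ 2 - r * ‖z - x₀‖) - ‖z - x₀‖ / r + q ^ 2 / (2 * m) := by
      rw [hq]; field_simp; ring
    linarith

lemma exists_isMinOn_of_strongConvexOn [NormedSpace ℝ E] [CompleteSpace E] (hm : 0 < m)
    (hF : StrongConvexOn D m F) (hclosed : ∀ c, IsClosed {x ∈ D | F x ≤ c}) (hD : D.Nonempty) :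
    ∃ x ∈ D, IsMinOn F D x := by
  have hbdd := bddBelow_image_of_strongConvexOn hm hF hclosed
  obtain ⟨u, hanti, hlim, hu⟩ := exists_seq_tendsto_sInf (hD.image F) hbdd
  choose z hzD hzu using hu
  obtain ⟨i, hi⟩ : ∃ i, i = sInf (F '' D) := ⟨_, rfl⟩
  rw [← hi] at hlim
  have hile : ∀ y ∈ D, i ≤ F y := fun y hy => hi ▸ csInf_le hbdd (mem_image_of_mem F hy)
  have hdist (n k N : ℕ) (hn : N ≤ n) (hk : N ≤ k) : dist (z n) (z k) ≤ √(8 / m * (u N - i)) := by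
    rw [dist_eq_norm]
    refine Real.le_sqrt_of_sq_le ?_
    have hhalf : (0 : ℝ) ≤ 1 / 2 := by norm_num
    have hmid := hF.2 (hzD n) (hzD k) hhalf hhalf (add_halves 1)
    have hmidge := hile _ (hF.1 (hzD n) (hzD k) hhalf hhalf (add_halves 1))
    simp only [smul_eq_mul, hzu] at hmid
    rw [div_mul_eq_mul_div, le_div_iff₀ hm]
    linarith [hanti hn, hanti hk]
  have hcauchy : CauchySeq z := by
    refine cauchySeq_of_le_tendsto_0 _ hdist ?_
    simpa using ((hlim.sub_const i).const_mul (8 / m)).sqrt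
  obtain ⟨x, hx⟩ := cauchySeq_tendsto_of_complete hcauchy
  have hmem (N : ℕ) : x ∈ {y ∈ D | F y ≤ u N} :=
    (hclosed (u N)).mem_of_tendsto hx <| eventually_atTop.2
      ⟨N, fun n hn => ⟨hzD n, (hzu n).trans_le (hanti hn)⟩⟩
  exact ⟨x, (hmem 0).1, fun y hy => (ge_of_tendsto' hlim fun N => (hmem N).2).trans (hile y hy)⟩

lemma add_sq_norm_sub_le_of_isMinOn_of_strongConvexOn [NormedSpace ℝ E]
    (hF : StrongConvexOn D m F) {x y : E} (hx : x ∈ D) (hmin : IsMinOn F D x) (hy : y ∈ D) :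
    F x + m / 2 * ‖y - x‖ ^ 2 ≤ F y := by
  have hsegment : ∀ t ∈ Ioo (0 : ℝ) 1, F x + (1 - t) * (m / 2 * ‖y - x‖ ^ 2) ≤ F y := by
    intro t ht
    have hle := (hmin (hF.1 hx hy (sub_nonneg.2 ht.2.le) ht.1.le (sub_add_cancel 1 t))).trans
      (hF.2 hx hy (sub_nonneg.2 ht.2.le) ht.1.le (sub_add_cancel 1 t))
    simp only [smul_eq_mul, norm_sub_rev x y] at hle
    exact le_of_mul_le_mul_left (by linarith) ht.1
  have hlim : Tendsto (fun t : ℝ => F x + (1 - t) * (m / 2 * ‖y - x‖ ^ 2)) (𝓝[>] 0)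
      (𝓝 (F x + (1 - 0) * (m / 2 * ‖y - x‖ ^ 2))) :=
    (Continuous.tendsto (by fun_prop) 0).mono_left nhdsWithin_le_nhds
  rw [sub_zero, one_mul] at hlim
  exact le_of_tendsto hlim <| by
    filter_upwards [Ioo_mem_nhdsGT one_pos] with t ht using hsegment t ht

lemma strongConvexOn_sq_norm_sub_div [InnerProductSpace ℝ E] (hD : Convex ℝ D) (τ : ℝ) (y : E) :
    StrongConvexOn D τ⁻¹ fun z => ‖z - y‖ ^ 2 / (2 * τ) := by
  refine strongConvexOn_iff_convex.2 ⟨hD, fun u _ v _ a b _ _ hab => le_of_eq ?_⟩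
  have expand (z : E) : ‖z - y‖ ^ 2 / (2 * τ) - τ⁻¹ / 2 * ‖z‖ ^ 2 =
      τ⁻¹ / 2 * (‖y‖ ^ 2 - 2 * ⟪z, y⟫) := by
    rw [norm_sub_sq_real]; ring
  simp only [expand, inner_add_left, real_inner_smul_left, smul_eq_mul]
  linear_combination (τ⁻¹ / 2 * ‖y‖ ^ 2) * (- hab)

end StrongConvexity

section MonotoneEstimates

variable {E : Type*} [NormedAddCommGroup E] [InnerProductSpace ℝ E] {lam τ : ℝ} {u p : E}

lemma norm_le_inv_mul_norm_add_smul (hτ : 0 ≤ τ) (hadm : 0 < 1 + τ * lam)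
    (h : lam * ‖u‖ ^ 2 ≤ ⟪p, u⟫) : ‖u‖ ≤ (1 + τ * lam)⁻¹ * ‖u + τ • p‖ := by
  rw [inv_mul_eq_div, le_div_iff₀ hadm]
  rcases (norm_nonneg u).eq_or_lt with hu | hu
  · simp [← hu]
  refine le_of_mul_le_mul_right ?_ hu
  calc ‖u‖ * (1 + τ * lam) * ‖u‖ = ‖u‖ ^ 2 + τ * (lam * ‖u‖ ^ 2) := by ring
    _ ≤ ‖u‖ ^ 2 + τ * ⟪p, u⟫ := by gcongr
    _ = ⟪u + τ • p, u⟫ := by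
      rw [inner_add_left, real_inner_smul_left, real_inner_self_eq_norm_sq]
    _ ≤ ‖u + τ • p‖ * ‖u‖ := real_inner_le_norm _ _

lemma norm_smul_le_max_mul_norm_add_smul (hτ : 0 ≤ τ) (hadm : 0 < 1 + τ * lam)
    (h : lam * ‖u‖ ^ 2 ≤ ⟪p, u⟫) :
    ‖τ • p‖ ≤ max 1 ((1 + τ * lam)⁻¹ - 1) * ‖u + τ • p‖ := by
  have hu := norm_le_inv_mul_norm_add_smul hτ hadm h
  have hexpand : ‖τ • p‖ ^ 2 ≤ ‖u + τ • p‖ ^ 2 - (1 + 2 * (τ * lam)) * ‖u‖ ^ 2 := by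
    rw [norm_add_sq_real, real_inner_smul_right, real_inner_comm]
    linarith [mul_le_mul_of_nonneg_left h hτ]
  obtain ⟨c, hc⟩ : ∃ c, c = (1 + τ * lam)⁻¹ := ⟨_, rfl⟩
  have hc0 : 0 < c := hc ▸ inv_pos.2 hadm
  have hcoef : 1 + 2 * (τ * lam) = 2 / c - 1 := by rw [hc, div_inv_eq_mul]; ring
  rw [← hc] at hu ⊢
  rw [hcoef] at hexpand
  rcases le_total c 2 with hc2 | hc2
  · have hone : 1 ≤ 2 / c := (one_le_div hc0).2 hc2
    have hle : ‖τ • p‖ ≤ ‖u + τ • p‖ := (sq_le_sq₀ (norm_nonneg _) (norm_nonneg _)).1 <|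
      hexpand.trans (sub_le_self _ (mul_nonneg (sub_nonneg.2 hone) (sq_nonneg _)))
    exact hle.trans (le_mul_of_one_le_left (norm_nonneg _) (le_max_left _ _))
  · have hone : 0 ≤ 1 - 2 / c := sub_nonneg.2 ((div_le_one hc0).2 hc2)
    have hsq : ‖τ • p‖ ^ 2 ≤ ((c - 1) * ‖u + τ • p‖) ^ 2 :=
      calc ‖τ • p‖ ^ 2 ≤ ‖u + τ • p‖ ^ 2 + (1 - 2 / c) * ‖u‖ ^ 2 := by linarith
        _ ≤ ‖u + τ • p‖ ^ 2 + (1 - 2 / c) * (c * ‖u + τ • p‖) ^ 2 := by gcongr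
        _ = ((c - 1) * ‖u + τ • p‖) ^ 2 := by field_simp; ring
    have hle := (sq_le_sq₀ (norm_nonneg _)
      (mul_nonneg (by linarith) (norm_nonneg _))).1 hsq
    exact hle.trans (mul_le_mul_of_nonneg_right (le_max_right _ _) (norm_nonneg _))

end MonotoneEstimates

section Subdifferential

variable {E : Type*} {f : E → EReal}

lemma coe_toReal_of_properFn (hf : ProperFn f) {x : E} (hx : f x ≠ ⊤) :
    ((f x).toReal : EReal) = f x := EReal.coe_toReal hx (hf.2 x)

variable [NormedAddCommGroup E] [InnerProductSpace ℝ E] {lam : ℝ}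

lemma mem_subdiff_iff_toReal (hf : ProperFn f) {x p : E} :
    p ∈ subdiff lam f x ↔ f x ≠ ⊤ ∧ ∀ y, f y ≠ ⊤ →
      (f x).toReal + (⟪p, y - x⟫ + lam / 2 * ‖y - x‖ ^ 2) ≤ (f y).toReal := by
  refine and_congr_right fun hx => forall_congr' fun y => ?_
  by_cases hy : f y = ⊤
  · simp [hy]
  · rw [← coe_toReal_of_properFn hf hx, ← coe_toReal_of_properFn hf hy, ← EReal.coe_add,
      EReal.coe_le_coe_iff]
    simp only [EReal.toReal_coe, ne_eq, EReal.coe_ne_top, not_false_eq_true, true_imp_iff]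

lemma subdiff_eq_iInter (hf : ProperFn f) {x : E} (hx : f x ≠ ⊤) :
    subdiff lam f x = ⋂ (y : E) (_ : f y ≠ ⊤),
      {p | ⟪p, y - x⟫ ≤ (f y).toReal - (f x).toReal - lam / 2 * ‖y - x‖ ^ 2} := by
  ext p
  simp only [mem_subdiff_iff_toReal hf, hx, ne_eq, not_false_eq_true, true_and, mem_iInter,
    mem_ofPred_eq]
  refine forall₂_congr fun y _ => ?_
  constructor <;> intro h <;> linarith

lemma isClosed_subdiff (hf : ProperFn f) {x : E} (hx : f x ≠ ⊤) :
    IsClosed (subdiff lam f x) := by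
  rw [subdiff_eq_iInter hf hx]
  exact isClosed_iInter fun y => isClosed_iInter fun _ =>
    isClosed_le (by fun_prop) continuous_const

lemma convex_subdiff (hf : ProperFn f) {x : E} (hx : f x ≠ ⊤) : Convex ℝ (subdiff lam f x) := by
  rw [subdiff_eq_iInter hf hx]
  exact convex_iInter fun y => convex_iInter fun _ =>
    convex_halfSpace_le ((innerₗ E).flip (y - x)).isLinear _

lemma exists_norm_le_of_subdiff_nonempty [CompleteSpace E] (hf : ProperFn f) {x : E}
    (h : (subdiff lam f x).Nonempty) :
    ∃ p ∈ subdiff lam f x, ∀ q ∈ subdiff lam f x, ‖p‖ ≤ ‖q‖ := by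
  have hx : f x ≠ ⊤ := h.some_mem.1
  obtain ⟨p, hp, hmin⟩ := exists_norm_eq_iInf_of_complete_convex h
    (isClosed_subdiff hf hx).isComplete (convex_subdiff hf hx) 0
  simp only [zero_sub, norm_neg] at hmin
  have hbdd : BddBelow (range fun q : subdiff lam f x => ‖(q : E)‖) :=
    ⟨0, forall_mem_range.2 fun q => norm_nonneg _⟩
  exact ⟨p, hp, fun q hq => hmin ▸ ciInf_le hbdd ⟨q, hq⟩⟩

lemma gradMin_mem_subdiff [CompleteSpace E] (hf : ProperFn f) {x : E}
    (h : (subdiff lam f x).Nonempty) : gradMin lam f x ∈ subdiff lam f x := by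
  rw [gradMin, dif_pos (exists_norm_le_of_subdiff_nonempty hf h)]
  exact (exists_norm_le_of_subdiff_nonempty hf h).choose_spec.1

lemma gradNorm_le_of_mem_subdiff [CompleteSpace E] (hf : ProperFn f) {x p : E}
    (hp : p ∈ subdiff lam f x) : gradNorm lam f x ≤ ENNReal.ofReal ‖p‖ := by
  have hex := exists_norm_le_of_subdiff_nonempty hf ⟨p, hp⟩
  rw [gradNorm, gradMin, if_pos ⟨p, hp⟩, dif_pos hex]
  exact ENNReal.ofReal_le_ofReal (hex.choose_spec.2 p hp)

lemma le_inner_sub_of_mem_subdiff (hf : ProperFn f) {x y p q : E}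
    (hp : p ∈ subdiff lam f x) (hq : q ∈ subdiff lam f y) :
    lam * ‖x - y‖ ^ 2 ≤ ⟪p - q, x - y⟫ := by
  rw [mem_subdiff_iff_toReal hf] at hp hq
  have hpy := hp.2 y hq.1
  have hqx := hq.2 x hp.1
  rw [← neg_sub x y, inner_neg_right, norm_neg] at hpy
  rw [inner_sub_left]
  linarith

end Subdifferential

section Resolvent

variable {E : Type*} [NormedAddCommGroup E] {f : E → EReal} {lam τ : ℝ}

/-- The real-valued functional `z ↦ f z + ‖z - y‖² / (2τ)` minimised by the resolvent `J_τ(y)`;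
it is meaningful on the domain `{f ≠ ⊤}` only, since `(⊤ : EReal).toReal = 0`. -/
def moreauObjective (f : E → EReal) (τ : ℝ) (y z : E) : ℝ :=
  (f z).toReal + ‖z - y‖ ^ 2 / (2 * τ)

/-- The Yosida regularization `(y - J_τ(y)) / τ` of the subdifferential of `f`. -/
def yosida [NormedSpace ℝ E] (f : E → EReal) (τ : ℝ) (y : E) : E :=
  τ⁻¹ • (y - Jres f τ y)

lemma coe_moreauObjective (hf : ProperFn f) (y : E) {z : E} (hz : f z ≠ ⊤) :
    (moreauObjective f τ y z : EReal) = f z + ((‖z - y‖ ^ 2 / (2 * τ) : ℝ) : EReal) := by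
  rw [moreauObjective, EReal.coe_add, coe_toReal_of_properFn hf hz]

lemma isClosed_sublevel_moreauObjective (hf : ProperFn f) (hlsc : LowerSemicontinuous f) (y : E)
    (c : ℝ) : IsClosed {z ∈ {z | f z ≠ ⊤} | moreauObjective f τ y z ≤ c} := by
  let q : E → EReal := fun z => ((‖z - y‖ ^ 2 / (2 * τ) : ℝ) : EReal)
  have hq : Continuous q := continuous_coe_real_ereal.comp (by fun_prop)
  have hsum : LowerSemicontinuous fun z => f z + q z :=
    hlsc.add' hq.lowerSemicontinuous fun z =>
      EReal.continuousAt_add (.inr (EReal.coe_ne_bot _)) (.inr (EReal.coe_ne_top _))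
  convert hsum.isClosed_preimage c using 1
  ext z
  by_cases hz : f z = ⊤
  · simp [hz, q]
  · simp [hz, q, ← coe_moreauObjective hf]

lemma Jres_add_smul_yosida [NormedSpace ℝ E] (hτ : τ ≠ 0) (y : E) :
    Jres f τ y + τ • yosida f τ y = y := by
  rw [yosida, smul_inv_smul₀ hτ, add_sub_cancel]

variable [InnerProductSpace ℝ E]

lemma strongConvexOn_toReal (hf : ProperFn f) (hconv : LambdaConvex lam f) :
    StrongConvexOn {x | f x ≠ ⊤} lam fun x => (f x).toReal := by
  have key : ∀ x, f x ≠ ⊤ → ∀ y, f y ≠ ⊤ → ∀ a b : ℝ, 0 ≤ a → 0 ≤ b → a + b = 1 →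
      f (a • x + b • y) ≤ ((a * (f x).toReal + b * (f y).toReal
        - a * b * (lam / 2 * ‖x - y‖ ^ 2) : ℝ) : EReal) := by
    intro x hx y hy a b ha hb hab
    obtain rfl : a = 1 - b := eq_sub_of_add_eq hab
    refine (hconv x y b hb (sub_nonneg.1 ha)).trans_eq ?_
    rw [← coe_toReal_of_properFn hf hx, ← coe_toReal_of_properFn hf hy]
    norm_cast
    simp only [EReal.toReal_coe]
    ring
  refine ⟨fun x hx y hy a b ha hb hab =>
    ne_top_of_le_ne_top (EReal.coe_ne_top _) (key x hx y hy a b ha hb hab),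
    fun x hx y hy a b ha hb hab => ?_⟩
  have hle := key x hx y hy a b ha hb hab
  rwa [← coe_toReal_of_properFn hf (ne_top_of_le_ne_top (EReal.coe_ne_top _) hle),
    EReal.coe_le_coe_iff] at hle

lemma strongConvexOn_moreauObjective (hf : ProperFn f) (hconv : LambdaConvex lam f) (y : E) :
    StrongConvexOn {z | f z ≠ ⊤} (lam + τ⁻¹) (moreauObjective f τ y) := by
  have hF := strongConvexOn_toReal hf hconv
  have hsum := hF.add (strongConvexOn_sq_norm_sub_div hF.1 τ y)
  unfold StrongConvexOn
  convert hsum using 1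
  · funext r
    simp only [Pi.add_apply]
    ring
  · rfl

lemma add_inv_pos_of_one_add_mul_pos (hτ : 0 < τ) (hadm : 0 < 1 + τ * lam) : 0 < lam + τ⁻¹ := by
  have : lam + τ⁻¹ = (1 + τ * lam) / τ := by field_simp; ring
  rw [this]; positivity

variable [CompleteSpace E]

lemma isMinOn_moreauObjective_Jres (hf : ProperFn f) (hconv : LambdaConvex lam f)
    (hlsc : LowerSemicontinuous f) (hτ : 0 < τ) (hadm : 0 < 1 + τ * lam) (y : E) :
    f (Jres f τ y) ≠ ⊤ ∧ IsMinOn (moreauObjective f τ y) {z | f z ≠ ⊤} (Jres f τ y) := by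
  obtain ⟨x, hx, hmin⟩ := exists_isMinOn_of_strongConvexOn
    (add_inv_pos_of_one_add_mul_pos hτ hadm) (strongConvexOn_moreauObjective hf hconv y)
    (isClosed_sublevel_moreauObjective hf hlsc y) hf.1
  have hex : ∃ x : E, ∀ z : E, f x + ((‖x - y‖ ^ 2 / (2 * τ) : ℝ) : EReal)
      ≤ f z + ((‖z - y‖ ^ 2 / (2 * τ) : ℝ) : EReal) := by
    refine ⟨x, fun z => ?_⟩
    by_cases hz : f z = ⊤
    · simp [hz]
    · rw [← coe_moreauObjective hf y hx, ← coe_moreauObjective hf y hz]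
      exact EReal.coe_le_coe (hmin hz)
  have hJ : ∀ z : E, f (Jres f τ y) + ((‖Jres f τ y - y‖ ^ 2 / (2 * τ) : ℝ) : EReal)
      ≤ f z + ((‖z - y‖ ^ 2 / (2 * τ) : ℝ) : EReal) := by
    rw [Jres, dif_pos hex]
    exact hex.choose_spec
  have hJtop : f (Jres f τ y) ≠ ⊤ := fun htop => by
    have hle := hJ x
    rw [htop, EReal.top_add_coe, ← coe_moreauObjective hf y hx] at hle
    exact EReal.coe_ne_top _ (top_le_iff.1 hle)
  refine ⟨hJtop, fun z hz => ?_⟩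
  have hle := hJ z
  rwa [← coe_moreauObjective hf y hJtop, ← coe_moreauObjective hf y hz,
    EReal.coe_le_coe_iff] at hle

lemma yosida_mem_subdiff (hf : ProperFn f) (hconv : LambdaConvex lam f)
    (hlsc : LowerSemicontinuous f) (hτ : 0 < τ) (hadm : 0 < 1 + τ * lam) (y : E) :
    yosida f τ y ∈ subdiff lam f (Jres f τ y) := by
  obtain ⟨hJ, hmin⟩ := isMinOn_moreauObjective_Jres hf hconv hlsc hτ hadm y
  refine (mem_subdiff_iff_toReal hf).2 ⟨hJ, fun z hz => ?_⟩
  have hgrowth := add_sq_norm_sub_le_of_isMinOn_of_strongConvexOn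
    (strongConvexOn_moreauObjective hf hconv y) hJ hmin hz
  have hexpand : ‖z - y‖ ^ 2 / (2 * τ) = ‖Jres f τ y - y‖ ^ 2 / (2 * τ)
      - ⟪yosida f τ y, z - Jres f τ y⟫ + τ⁻¹ / 2 * ‖z - Jres f τ y‖ ^ 2 := by
    rw [yosida, real_inner_smul_left, ← sub_sub_sub_cancel_right z y (Jres f τ y),
      norm_sub_rev (Jres f τ y), norm_sub_sq_real, real_inner_comm]
    ring
  simp only [moreauObjective, hexpand] at hgrowth
  linarith

lemma le_inner_yosida_sub (hf : ProperFn f) (hconv : LambdaConvex lam f)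
    (hlsc : LowerSemicontinuous f) (hτ : 0 < τ) (hadm : 0 < 1 + τ * lam) (y z : E) :
    lam * ‖Jres f τ y - Jres f τ z‖ ^ 2 ≤
      ⟪yosida f τ y - yosida f τ z, Jres f τ y - Jres f τ z⟫ :=
  le_inner_sub_of_mem_subdiff hf (yosida_mem_subdiff hf hconv hlsc hτ hadm y)
    (yosida_mem_subdiff hf hconv hlsc hτ hadm z)

lemma lipschitzWith_Jres (hf : ProperFn f) (hconv : LambdaConvex lam f)
    (hlsc : LowerSemicontinuous f) (hτ : 0 < τ) (hadm : 0 < 1 + τ * lam) :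
    LipschitzWith (1 + τ * lam)⁻¹.toNNReal (Jres f τ) :=
  LipschitzWith.of_dist_le' fun y z => by
    have hle := norm_le_inv_mul_norm_add_smul hτ.le hadm
      (le_inner_yosida_sub hf hconv hlsc hτ hadm y z)
    rwa [smul_sub, sub_add_sub_comm, Jres_add_smul_yosida hτ.ne', Jres_add_smul_yosida hτ.ne',
      ← dist_eq_norm, ← dist_eq_norm] at hle

lemma lipschitzWith_yosida (hf : ProperFn f) (hconv : LambdaConvex lam f)
    (hlsc : LowerSemicontinuous f) (hτ : 0 < τ) (hadm : 0 < 1 + τ * lam) :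
    LipschitzWith (max 1 ((1 + τ * lam)⁻¹ - 1) / τ).toNNReal (yosida f τ) :=
  LipschitzWith.of_dist_le' fun y z => by
    have hle := norm_smul_le_max_mul_norm_add_smul hτ.le hadm
      (le_inner_yosida_sub hf hconv hlsc hτ hadm y z)
    rw [norm_smul, Real.norm_of_nonneg hτ.le, smul_sub, sub_add_sub_comm,
      Jres_add_smul_yosida hτ.ne', Jres_add_smul_yosida hτ.ne'] at hle
    rwa [dist_eq_norm, dist_eq_norm, div_mul_eq_mul_div, le_div_iff₀' hτ]

lemma Jres_add_smul_of_mem_subdiff (hf : ProperFn f) (hconv : LambdaConvex lam f)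
    (hlsc : LowerSemicontinuous f) (hτ : 0 < τ) (hadm : 0 < 1 + τ * lam) {x p : E}
    (hp : p ∈ subdiff lam f x) : Jres f τ (x + τ • p) = x := by
  have hle := norm_le_inv_mul_norm_add_smul hτ.le hadm
    (le_inner_sub_of_mem_subdiff hf (yosida_mem_subdiff hf hconv hlsc hτ hadm (x + τ • p)) hp)
  rwa [smul_sub, sub_add_sub_comm, Jres_add_smul_yosida hτ.ne', sub_self, norm_zero, mul_zero,
    norm_le_zero_iff, sub_eq_zero] at hle

lemma yosida_add_smul_of_mem_subdiff (hf : ProperFn f) (hconv : LambdaConvex lam f)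
    (hlsc : LowerSemicontinuous f) (hτ : 0 < τ) (hadm : 0 < 1 + τ * lam) {x p : E}
    (hp : p ∈ subdiff lam f x) : yosida f τ (x + τ • p) = p := by
  rw [yosida, Jres_add_smul_of_mem_subdiff hf hconv hlsc hτ hadm hp, add_sub_cancel_left,
    inv_smul_smul₀ hτ.ne']

end Resolvent

section Interpolation

lemma norm_sq_lineMap_le_of_lipschitzWith {V W : Type*} [NormedAddCommGroup V] [NormedSpace ℝ V]
    [NormedAddCommGroup W] {G : V → W} {K : NNReal} (hG : LipschitzWith K G) (y₀ y₁ : V) {s : ℝ}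
    (hs : s ∈ Icc (0 : ℝ) 1) :
    ‖G (AffineMap.lineMap y₀ y₁ s)‖ ^ 2 ≤
      2 * min (‖G y₀‖ ^ 2) (‖G y₁‖ ^ 2) + 2 * (K * dist y₀ y₁) ^ 2 := by
  have hnear (z : V) (hz : dist (AffineMap.lineMap y₀ y₁ s) z ≤ dist y₀ y₁) :
      ‖G (AffineMap.lineMap y₀ y₁ s)‖ ^ 2 ≤ 2 * ‖G z‖ ^ 2 + 2 * (K * dist y₀ y₁) ^ 2 := by
    have hdist := dist_eq_norm (G _) (G z) ▸ hG.dist_le_mul_of_le hz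
    have hsplit := norm_add_sq_le_two_mul (G z) (G (AffineMap.lineMap y₀ y₁ s) - G z)
    rw [add_sub_cancel] at hsplit
    exact hsplit.trans (by gcongr)
  rw [mul_min_of_nonneg _ _ zero_le_two, ← min_add_add_right]
  refine le_min (hnear y₀ ?_) (hnear y₁ ?_)
  · rw [dist_lineMap_left, Real.norm_of_nonneg hs.1]
    exact mul_le_of_le_one_left dist_nonneg hs.2
  · rw [dist_lineMap_right, Real.norm_of_nonneg (sub_nonneg.2 hs.2)]
    exact mul_le_of_le_one_left dist_nonneg (sub_le_self _ hs.1)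

variable {E : Type*} [NormedAddCommGroup E] [InnerProductSpace ℝ E] [CompleteSpace E]
  {f : E → EReal} {lam τ δ : ℝ}

lemma GammaInf_le_of_lipschitzWith {V W : Type*} [NormedAddCommGroup V] [NormedSpace ℝ V]
    [NormedAddCommGroup W] {J : V → E} {G : V → W} {K L : NNReal} (hJ : LipschitzWith K J)
    (hG : LipschitzWith L G) (hJG : ∀ y, gradNorm lam f (J y) ≤ ENNReal.ofReal ‖G y‖)
    (hδ : 0 < δ) (y₀ y₁ : V) :
    GammaInf lam f δ (J y₀) (J y₁) ≤ ENNReal.ofReal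
      (2 * δ * min (‖G y₀‖ ^ 2) (‖G y₁‖ ^ 2) + (K ^ 2 / δ + 2 * δ * L ^ 2) * ‖y₁ - y₀‖ ^ 2) := by
  let γ : ℝ → E := fun t => J (AffineMap.lineMap y₀ y₁ (t / δ))
  have hends : γ 0 = J y₀ ∧ γ δ = J y₁ := by simp [γ, hδ.ne']
  have hγ : LipschitzWith (K * (nndist y₀ y₁ * δ⁻¹.toNNReal)) γ :=
    hJ.comp <| (lipschitzWith_lineMap y₀ y₁).comp <| LipschitzWith.of_dist_le' fun s t => by
      rw [Real.dist_eq, Real.dist_eq, ← sub_div, abs_div, abs_of_pos hδ, div_eq_inv_mul]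
  have hgrad : ∀ t ∈ Ioc 0 δ, gradNorm lam f (γ t) ^ 2 ≤ ENNReal.ofReal
      (2 * min (‖G y₀‖ ^ 2) (‖G y₁‖ ^ 2) + 2 * (L * dist y₀ y₁) ^ 2) := fun t ht =>
    calc gradNorm lam f (γ t) ^ 2 ≤ ENNReal.ofReal (‖G (AffineMap.lineMap y₀ y₁ (t / δ))‖ ^ 2) := by
          rw [ENNReal.ofReal_pow (norm_nonneg _)]
          gcongr
          exact hJG _
      _ ≤ _ := ENNReal.ofReal_le_ofReal <| norm_sq_lineMap_le_of_lipschitzWith hG y₀ y₁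
          ⟨div_nonneg ht.1.le hδ.le, (div_le_one hδ).2 ht.2⟩
  refine (iInf₂_le γ hends).trans ((actionFn_le_of_lipschitzWith hγ hgrad).trans_eq ?_)
  rw [← ENNReal.ofReal_coe_nnreal, ← ENNReal.ofReal_pow (NNReal.coe_nonneg _),
    ← ENNReal.ofReal_add (by positivity) (by positivity), ← ENNReal.ofReal_mul (by positivity)]
  congr 1
  push_cast
  rw [Real.coe_toNNReal _ (inv_nonneg.2 hδ.le), dist_eq_norm, norm_sub_rev]
  field_simp
  ring

lemma norm_add_smul_sub_add_smul_sq_le {V : Type*} [NormedAddCommGroup V] [NormedSpace ℝ V]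
    (τ : ℝ) (x y p q : V) :
    ‖(y + τ • q) - (x + τ • p)‖ ^ 2 ≤ 2 * ‖y - x‖ ^ 2 + 2 * (τ ^ 2 * ‖q - p‖ ^ 2) := by
  have hsplit := norm_add_sq_le_two_mul (y - x) (τ • (q - p))
  rwa [norm_smul, mul_pow, Real.norm_eq_abs, sq_abs, smul_sub, sub_add_sub_comm] at hsplit

lemma interpolation_constant_mul_le {c D X P : ℝ} (hc : 0 ≤ c) (hc₂ : c ≤ 2) (hτ : 0 < τ)
    (hδ : 0 < δ) (hX : 0 ≤ X) (hP : 0 ≤ P) (hD : D ≤ 2 * X + 2 * (τ ^ 2 * P)) :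
    (c ^ 2 / δ + 2 * δ * (max 1 (c - 1) / τ) ^ 2) * D ≤
      (40 / δ + 12 * δ / τ ^ 2) * X + (12 * δ + 40 * τ ^ 2 / δ) * P := by
  rw [max_eq_left (by linarith : c - 1 ≤ 1)]
  calc (c ^ 2 / δ + 2 * δ * (1 / τ) ^ 2) * D
      ≤ (c ^ 2 / δ + 2 * δ * (1 / τ) ^ 2) * (2 * X + 2 * (τ ^ 2 * P)) := by gcongr
    _ ≤ (2 ^ 2 / δ + 2 * δ * (1 / τ) ^ 2) * (2 * X + 2 * (τ ^ 2 * P)) := by gcongr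
    _ = (8 / δ + 4 * δ / τ ^ 2) * X + (4 * δ + 8 * τ ^ 2 / δ) * P := by field_simp; ring
    _ ≤ (40 / δ + 12 * δ / τ ^ 2) * X + (12 * δ + 40 * τ ^ 2 / δ) * P := by gcongr <;> norm_num

theorem statement16_general (hf : ProperFn f) (hconv : LambdaConvex lam f)
    (hlsc : LowerSemicontinuous f) (hτ : 0 < τ) (hadm : 0 < 1 + τ * lam) (hδ : 0 < δ)
    {x0 xδ p0 pδ : E} (h0 : p0 ∈ subdiff lam f x0) (h1 : pδ ∈ subdiff lam f xδ) :
    GammaInf lam f δ x0 xδ ≤ ENNReal.ofReal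
      (2 * δ * min (‖p0‖ ^ 2) (‖pδ‖ ^ 2)
        + ((1 + τ * lam)⁻¹ ^ 2 / δ + 2 * δ * (max 1 ((1 + τ * lam)⁻¹ - 1) / τ) ^ 2)
          * ‖(xδ + τ • pδ) - (x0 + τ • p0)‖ ^ 2) := by
  have hbound := GammaInf_le_of_lipschitzWith (lipschitzWith_Jres hf hconv hlsc hτ hadm)
    (lipschitzWith_yosida hf hconv hlsc hτ hadm)
    (fun y => gradNorm_le_of_mem_subdiff hf (yosida_mem_subdiff hf hconv hlsc hτ hadm y))
    hδ (x0 + τ • p0) (xδ + τ • pδ)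
  rwa [Jres_add_smul_of_mem_subdiff hf hconv hlsc hτ hadm h0,
    Jres_add_smul_of_mem_subdiff hf hconv hlsc hτ hadm h1,
    yosida_add_smul_of_mem_subdiff hf hconv hlsc hτ hadm h0,
    yosida_add_smul_of_mem_subdiff hf hconv hlsc hτ hadm h1,
    Real.coe_toNNReal _ (by positivity), Real.coe_toNNReal _ (by positivity)] at hbound

end Interpolation

/-- the interpolation lemma. -/
theorem statement16 (lam : ℝ) (f : H → EReal)
    (hf : ProperFn f) (hconv : LambdaConvex lam f) (hlsc : LowerSemicontinuous f)
    (τ : ℝ) (hτ : 0 < τ) (hadm : 0 < 1 + τ * lam) (hb : (1 + τ * lam)⁻¹ ≤ 2)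
    (δ : ℝ) (hδ : 0 < δ) (x0 xδ : H)
    (h0 : (subdiff lam f x0).Nonempty) (h1 : (subdiff lam f xδ).Nonempty) :
    GammaInf lam f δ x0 xδ ≤ ENNReal.ofReal
      (2 * δ * min (‖gradMin lam f x0‖ ^ 2) (‖gradMin lam f xδ‖ ^ 2)
        + (40 / δ + 12 * δ / τ ^ 2) * ‖xδ - x0‖ ^ 2
        + (12 * δ + 40 * τ ^ 2 / δ) * ‖gradMin lam f xδ - gradMin lam f x0‖ ^ 2) := by
  refine (statement16_general hf hconv hlsc hτ hadm hδ (gradMin_mem_subdiff hf h0)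
    (gradMin_mem_subdiff hf h1)).trans (ENNReal.ofReal_le_ofReal ?_)
  rw [add_assoc]
  exact add_le_add_right (interpolation_constant_mul_le (inv_pos.2 hadm).le hb hτ hδ
    (sq_nonneg _) (sq_nonneg _) (norm_add_smul_sub_add_smul_sq_le τ _ _ _ _)) _

end
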